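/- Reparametrization formula for (p,q)-Bernstein basis functions: let n ≥ 1, let p, q be reals with 0 < q < p, and let 0 ≤ k ≤ n. Then for all reals r and t, B_k^n(rt;p,q) = Σ_{i=k}^{n} B_k^i(r;p,q) B_i^n(t;p,q). -/

import Mathlib

/-- The (p,q)-integer `[n]_{p,q} = Σ_{j=0}^{n-1} p^{n-1-j} q^j`. -/
noncomputable def pqInt (p q : ℝ) (n : ℕ) : ℝ :=
  ∑ j ∈ Finset.range n, p ^ (n - 1 - j) * q ^ j

/-- The (p,q)-factorial `[n]_{p,q}! = ∏_{j=1}^{n} [j]_{p,q}`. -/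
noncomputable def pqFact (p q : ℝ) : ℕ → ℝ
  | 0 => 1
  | n + 1 => pqFact p q n * pqInt p q (n + 1)

/-- The (p,q)-binomial coefficient `[n choose k]_{p,q}`. -/
noncomputable def pqBinom (p q : ℝ) (n k : ℕ) : ℝ :=
  pqFact p q n / (pqFact p q k * pqFact p q (n - k))

/-- The (p,q)-Bernstein basis function
`B_k^n(t;p,q) = p^{k(k-1)/2 - n(n-1)/2} [n choose k]_{p,q} t^k ∏_{s=0}^{n-k-1} (p^s - q^s t)`. -/
noncomputable def pqBernstein (p q : ℝ) (n k : ℕ) (t : ℝ) : ℝ :=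
  p ^ (k * (k - 1) / 2) / p ^ (n * (n - 1) / 2) * pqBinom p q n k * t ^ k *
    ∏ s ∈ Finset.range (n - k), (p ^ s - q ^ s * t)

lemma pqInt_mul (p q : ℝ) (n : ℕ) : pqInt p q n * (p - q) = p ^ n - q ^ n := by
  have h := geom_sum₂_mul q p n
  have h2 : pqInt p q n = ∑ i ∈ Finset.range n, q ^ i * p ^ (n - 1 - i) :=
    Finset.sum_congr rfl fun _ _ => mul_comm _ _
  rw [h2]
  linarith

lemma pqInt_add (p q : ℝ) (hqp : q < p) (i j : ℕ) :
    pqInt p q (i + j) = p ^ i * pqInt p q j + q ^ j * pqInt p q i := by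
  have h : p - q ≠ 0 := (sub_pos.2 hqp).ne'
  apply mul_right_cancel₀ h
  rw [add_mul, mul_assoc, mul_assoc, pqInt_mul, pqInt_mul, pqInt_mul]
  ring

lemma pqInt_pos (p q : ℝ) (h0 : 0 < q) (hqp : q < p) (n : ℕ) : 0 < pqInt p q (n + 1) := by
  have hp : 0 < p := h0.trans hqp
  unfold pqInt
  exact Finset.sum_pos (fun _ _ => by positivity) ⟨0, by simp⟩

lemma pqFact_pos (p q : ℝ) (h0 : 0 < q) (hqp : q < p) (n : ℕ) : 0 < pqFact p q n := by
  induction n with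
  | zero => simp [pqFact]
  | succ n ih => exact mul_pos ih (pqInt_pos p q h0 hqp n)

/-- The normalized product. -/
noncomputable def pqP (p q x : ℝ) (m : ℕ) : ℝ :=
  (∏ s ∈ Finset.range m, (p ^ s - q ^ s * x)) / pqFact p q m

lemma pqP_succ (p q : ℝ) (h0 : 0 < q) (hqp : q < p) (x : ℝ) (m : ℕ) :
    pqInt p q (m + 1) * pqP p q x (m + 1) = pqP p q x m * (p ^ m - q ^ m * x) := by
  have h1 := (pqInt_pos p q h0 hqp m).ne'
  have h2 := (pqFact_pos p q h0 hqp m).ne'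
  unfold pqP
  rw [Finset.prod_range_succ, pqFact]
  generalize ∏ s ∈ Finset.range m, (p ^ s - q ^ s * x) = A
  field_simp

lemma pqP_conv (p q : ℝ) (h0 : 0 < q) (hqp : q < p) (r t : ℝ) (m : ℕ) :
    pqP p q (r * t) m =
      ∑ x ∈ Finset.HasAntidiagonal.antidiagonal m, (pqP p q r x.1 * t ^ x.1) * pqP p q t x.2 := by
  induction m with
  | zero => simp [pqP, pqFact]
  | succ m ih =>
    apply mul_left_cancel₀ (pqInt_pos p q h0 hqp m).ne'
    rw [pqP_succ p q h0 hqp, ih, Finset.mul_sum]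
    have e : ∀ x ∈ Finset.HasAntidiagonal.antidiagonal (m + 1),
        pqInt p q (m + 1) * ((pqP p q r x.1 * t ^ x.1) * pqP p q t x.2) =
        p ^ x.1 * (pqP p q r x.1 * t ^ x.1) * (pqInt p q x.2 * pqP p q t x.2) +
        q ^ x.2 * (pqInt p q x.1 * pqP p q r x.1) * t ^ x.1 * pqP p q t x.2 := by
      intro x hx
      rw [← Finset.HasAntidiagonal.mem_antidiagonal.1 hx, pqInt_add p q hqp]
      ring
    have z : pqInt p q 0 = 0 := by simp [pqInt]
    rw [Finset.sum_congr rfl e, Finset.sum_add_distrib,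
      Finset.Nat.sum_antidiagonal_succ', Finset.Nat.sum_antidiagonal_succ]
    simp only [z, pqP_succ p q h0 hqp, zero_mul, mul_zero, zero_add, add_zero]
    rw [← Finset.sum_add_distrib, Finset.sum_mul]
    refine Finset.sum_congr rfl fun x hx => ?_
    rw [← Finset.HasAntidiagonal.mem_antidiagonal.1 hx]
    ring

/-- reparametrization formula for (p,q)-Bernstein basis functions:
`B_k^n(rt;p,q) = Σ_{i=k}^{n} B_k^i(r;p,q) B_i^n(t;p,q)`. -/
theorem pqBernstein_reparametrization (n k : ℕ) (hn : 1 ≤ n) (hk : k ≤ n)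
    (p q : ℝ) (h0 : 0 < q) (hqp : q < p) (r t : ℝ) :
    pqBernstein p q n k (r * t) =
      ∑ i ∈ Finset.Icc k n, pqBernstein p q i k r * pqBernstein p q n i t := by
  have hp : 0 < p := h0.trans hqp
  have F := fun m => (pqFact_pos p q h0 hqp m).ne'
  obtain ⟨m, rfl⟩ := Nat.exists_eq_add_of_le hk
  have key := pqP_conv p q h0 hqp r t m
  rw [Finset.Nat.sum_antidiagonal_eq_sum_range_succ_mk] at key
  have hB : ∀ a b x, pqBernstein p q (a + b) a x =
      p ^ (a * (a - 1) / 2) / p ^ ((a + b) * (a + b - 1) / 2) *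
        (pqFact p q (a + b) / pqFact p q a) * x ^ a * pqP p q x b := by
    intro a b x
    have := F a
    have := F b
    simp only [pqBernstein, pqBinom, pqP, Nat.add_sub_cancel_left]
    generalize ∏ s ∈ Finset.range b, (p ^ s - q ^ s * x) = A
    field_simp
  rw [hB, key, ← Finset.Ico_add_one_right_eq_Icc, Finset.sum_Ico_eq_sum_range,
    show k + m + 1 - k = m + 1 by omega, Finset.mul_sum]
  refine Finset.sum_congr rfl fun i hi => ?_
  obtain ⟨j, rfl⟩ := Nat.exists_eq_add_of_le (Nat.lt_succ_iff.1 (Finset.mem_range.1 hi))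
  have h2 := hB (k + i) j t
  rw [add_assoc k i j] at h2
  rw [hB, h2, Nat.add_sub_cancel_left]
  have := F (k + i)
  have := F k
  have hp1 : p ^ ((k + i) * (k + i - 1) / 2) ≠ 0 := by positivity
  have hp2 : p ^ ((k + (i + j)) * (k + (i + j) - 1) / 2) ≠ 0 := by positivity
  generalize p ^ ((k + i) * (k + i - 1) / 2) = A at *
  generalize p ^ ((k + (i + j)) * (k + (i + j) - 1) / 2) = B at *
  field_simp
  try ring
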